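/- arXiv:2605.25897 — 3 statements merged into one kernel-verified Lean document; each statement's English description precedes it below -/
import Mathlib

section
/- Let F be a CDF on ℝ whose quantile function Q = F^{-1} is locally absolutely continuous on (0,1) with a.e. derivative q ≥ 0 satisfying C := ∫₀¹ √(u(1−u)) q(u) du < ∞. Then for every positive integer m, ‖F_m − F‖₁ = ∫_ℝ |H_m(F)(x) − F(x)| dx ≤ C · m^{−1/2}; in particular ‖F_m − F‖₁ = O(m^{−1/2}) as m → ∞. -/
open MeasureTheory Filter Set
open scoped BoundedContinuousFunction ProbabilityTheory

noncomputable section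

/-- Density of the Beta(j, m-j+1) distribution. -/
def betaDens (m j : ℕ) (u : ℝ) : ℝ :=
  (m : ℝ) * ((m - 1).choose (j - 1) : ℝ) * u ^ (j - 1) * (1 - u) ^ (m - j)

/-- Quantile function (left-continuous generalized inverse). -/
def quantile (G : ℝ → ℝ) (p : ℝ) : ℝ :=
  sInf {x : ℝ | p ≤ G x}

/-- `G` is a cumulative distribution function on ℝ. -/
structure IsCDF (G : ℝ → ℝ) : Prop where
  mono : Monotone G
  rightCont : ∀ x, ContinuousWithinAt G (Ici x) x
  tendsto_atBot : Tendsto G atBot (nhds 0)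
  tendsto_atTop : Tendsto G atTop (nhds 1)

/-- `G` has finite mean: its quantile function is integrable on (0,1). -/
def HasFiniteMean (G : ℝ → ℝ) : Prop :=
  IntegrableOn (fun u => quantile G u) (Ioo (0:ℝ) 1)

/-- Expected j-th order statistic from a sample of size m drawn from G. -/
def muOS (m j : ℕ) (G : ℝ → ℝ) : ℝ :=
  ∫ u in Ioo (0:ℝ) 1, quantile G u * betaDens m j u

/-- The Hoeffding CDF operator `H_m`. -/
def hoeffCDF (m : ℕ) (G : ℝ → ℝ) (x : ℝ) : ℝ :=
  (m : ℝ)⁻¹ * ∑ j ∈ Finset.Icc 1 m, if muOS m j G ≤ x then (1:ℝ) else 0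

/-- The quantile-Hoeffding operator `I_m`. -/
def quantHoeff (m : ℕ) (h : ℝ → ℝ) (u : ℝ) : ℝ :=
  ∑ j ∈ Finset.Icc 1 m,
    (∫ t in Ioo (0:ℝ) 1, h t * betaDens m j t) *
      (if u ∈ Ioc (((j : ℝ) - 1) / m) ((j : ℝ) / m) then (1:ℝ) else 0)

/-- Empirical CDF of the reals `x 0, ..., x (n-1)`. -/
def ecdf (n : ℕ) (x : ℕ → ℝ) (t : ℝ) : ℝ :=
  (n : ℝ)⁻¹ * ∑ i ∈ Finset.range n, if x i ≤ t then (1:ℝ) else 0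

/-- Empirical CDF of the random sample `X 0, ..., X (n-1)`. -/
def empCDF {Ω : Type*} (X : ℕ → Ω → ℝ) (n : ℕ) (ω : Ω) : ℝ → ℝ :=
  fun t => (n : ℝ)⁻¹ * ∑ i ∈ Finset.range n, if X i ω ≤ t then (1:ℝ) else 0


lemma hx_quantile_le_iff {F : ℝ → ℝ} (hF : IsCDF F) {u : ℝ} (hu : u ∈ Ioo (0:ℝ) 1) (x : ℝ) :
    quantile F u ≤ x ↔ u ≤ F x := by
  have hbdd : BddBelow {x : ℝ | u ≤ F x} := by
    obtain ⟨y, hy⟩ := (hF.tendsto_atBot.eventually (gt_mem_nhds hu.1)).exists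
    refine ⟨y, fun z hz => ?_⟩
    by_contra h
    push Not at h
    have := hF.mono h.le
    simp only [mem_ofPred_eq] at hz
    linarith
  have hne : {x : ℝ | u ≤ F x}.Nonempty := by
    obtain ⟨y, hy⟩ := (hF.tendsto_atTop.eventually (lt_mem_nhds hu.2)).exists
    exact ⟨y, hy.le⟩
  refine ⟨fun h => ?_, fun h => csInf_le hbdd h⟩
  by_contra hlt
  push Not at hlt
  have hev : ∀ᶠ y in nhdsWithin x (Ioi x), F y < u :=
    ((hF.rightCont x).mono Ioi_subset_Ici_self).eventually (gt_mem_nhds hlt)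
  obtain ⟨y, hy, hxy⟩ := (hev.and self_mem_nhdsWithin).exists
  have : y ≤ quantile F u := by
    apply le_csInf hne
    intro z hz
    by_contra h2
    push Not at h2
    have := hF.mono h2.le
    simp only [mem_ofPred_eq] at hz
    linarith
  have hxy' : x < y := hxy
  linarith

lemma hx_telescope (φ ψ : ℕ → ℝ) (k m : ℕ) (h : k ≤ m) :
    ∑ j ∈ Finset.range m, (if j < k then φ (j+1) - φ j else ψ j - ψ (j+1))
      = φ k - φ 0 + (ψ k - ψ m) := by
  induction m, h using Nat.le_induction with
  | base =>
    rw [← Finset.sum_range_sub φ k, sub_self, add_zero]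
    exact Finset.sum_congr rfl fun j hj => by simp [Finset.mem_range.1 hj]
  | succ m hm ih =>
    rw [Finset.sum_range_succ, ih, if_neg (by omega)]
    ring

/-- binomial weights -/
def hxW (m k : ℕ) (s : ℝ) : ℝ := (bernsteinPolynomial ℝ m k).eval s

/-- binomial tail -/
def hxS (m j : ℕ) (s : ℝ) : ℝ := ∑ k ∈ Finset.range (m+1), if j < k then hxW m k s else 0

lemma hxS_deriv (m j : ℕ) (hj : j < m) (s : ℝ) :
    HasDerivAt (hxS m j) (betaDens m (j+1) s) s := by
  obtain ⟨n, rfl⟩ : ∃ n, m = n + 1 := ⟨m - 1, by omega⟩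
  have h1 : HasDerivAt (hxS (n+1) j) (∑ k ∈ Finset.range (n+1+1), if j < k then
      ((Polynomial.derivative (bernsteinPolynomial ℝ (n+1) k)).eval s) else 0) s := by
    unfold hxS
    apply HasDerivAt.fun_sum
    intro k _
    split_ifs
    · exact Polynomial.hasDerivAt _ _
    · exact hasDerivAt_const _ _
  convert h1 using 1
  rw [Finset.sum_range_succ']
  have := hx_telescope (fun _ => 0) (fun k => ((n:ℝ)+1) * (bernsteinPolynomial ℝ n k).eval s) j (n+1) hj.le
  simp only [Nat.not_lt_zero, if_false, add_zero]
  have h2 : ∀ k ∈ Finset.range (n+1), (if j < k + 1 then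
      ((Polynomial.derivative (bernsteinPolynomial ℝ (n+1) (k+1))).eval s) else 0) =
      (if k < j then (0:ℝ) - 0 else ((n:ℝ)+1) * (bernsteinPolynomial ℝ n k).eval s
        - ((n:ℝ)+1) * (bernsteinPolynomial ℝ n (k+1)).eval s) := by
    intro k _
    by_cases h : k < j
    · rw [if_neg (by omega), if_pos h]; simp
    · rw [if_pos (by omega), if_neg h, bernsteinPolynomial.derivative_succ]
      simp; ring
  rw [Finset.sum_congr rfl h2, this, bernsteinPolynomial.eq_zero_of_lt ℝ (Nat.lt_succ_self n)]
  simp [betaDens, bernsteinPolynomial]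
  ring

lemma hxW_sum (m : ℕ) (s : ℝ) : ∑ k ∈ Finset.range (m+1), hxW m k s = 1 := by
  have := congrArg (Polynomial.eval s) (bernsteinPolynomial.sum ℝ m)
  simpa [Polynomial.eval_finsetSum, hxW] using this

lemma hxS_zero (m j : ℕ) : hxS m j 0 = 0 := by
  unfold hxS hxW
  apply Finset.sum_eq_zero
  intro k _
  split_ifs with h
  · simp [bernsteinPolynomial, show k ≠ 0 by omega]
  · rfl

lemma hxS_one (m j : ℕ) (hj : j < m) : hxS m j 1 = 1 := by
  unfold hxS hxW
  rw [Finset.sum_eq_single m]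
  · simp [hj, bernsteinPolynomial]
  · intro k hk hkm
    have : k < m := by have := Finset.mem_range.1 hk; omega
    simp [bernsteinPolynomial, show m - k ≠ 0 by omega]
  · simp

lemma hxW_nonneg (m k : ℕ) {s : ℝ} (h0 : 0 ≤ s) (h1 : s ≤ 1) : 0 ≤ hxW m k s := by
  have : 0 ≤ 1 - s := by linarith
  simp only [hxW, bernsteinPolynomial, Polynomial.eval_mul, Polynomial.eval_natCast,
    Polynomial.eval_pow, Polynomial.eval_X, Polynomial.eval_sub, Polynomial.eval_one]
  positivity

lemma hxW_variance (m : ℕ) (s : ℝ) :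
    ∑ k ∈ Finset.range (m+1), (m * s - k)^2 * hxW m k s = m * s * (1 - s) := by
  have := congrArg (Polynomial.eval s) (bernsteinPolynomial.variance ℝ m)
  simpa [Polynomial.eval_finsetSum, hxW] using this

lemma hx_meanabs (m : ℕ) (hm : 0 < m) {s : ℝ} (h0 : 0 ≤ s) (h1 : s ≤ 1) :
    ∑ k ∈ Finset.range (m+1), |(k:ℝ)/m - s| * hxW m k s
      ≤ Real.sqrt (s * (1 - s)) * ((m : ℝ) ^ (-(1:ℝ)/2)) := by
  have hm' : (0:ℝ) < m := by exact_mod_cast hm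
  have e : (m : ℝ) ^ (-(1:ℝ)/2) = (Real.sqrt m)⁻¹ := by
    rw [neg_div, Real.rpow_neg hm'.le, Real.sqrt_eq_rpow]
  rw [e, ← Real.sqrt_inv, ← Real.sqrt_mul (by nlinarith)]
  apply Real.le_sqrt_of_sq_le
  have cs := Finset.sum_mul_sq_le_sq_mul_sq (Finset.range (m+1))
    (fun k => |(k:ℝ)/m - s| * Real.sqrt (hxW m k s)) (fun k => Real.sqrt (hxW m k s))
  have h2 : ∑ k ∈ Finset.range (m+1), |(k:ℝ)/m - s| * hxW m k s =
     ∑ k ∈ Finset.range (m+1), |(k:ℝ)/m - s| * Real.sqrt (hxW m k s) * Real.sqrt (hxW m k s) :=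
    Finset.sum_congr rfl fun k _ => by
      rw [mul_assoc, Real.mul_self_sqrt (hxW_nonneg m k h0 h1)]
  rw [h2]
  refine cs.trans (le_of_eq ?_)
  have h3 : ∑ k ∈ Finset.range (m+1), (Real.sqrt (hxW m k s))^2 = 1 := by
    rw [← hxW_sum m s]
    exact Finset.sum_congr rfl fun k _ => Real.sq_sqrt (hxW_nonneg m k h0 h1)
  rw [h3, mul_one]
  have h4 : ∑ k ∈ Finset.range (m+1), (|(k:ℝ)/m - s| * Real.sqrt (hxW m k s))^2 =
      ∑ k ∈ Finset.range (m+1), ((m:ℝ)^2)⁻¹ * ((m * s - k)^2 * hxW m k s) := by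
    refine Finset.sum_congr rfl fun k _ => ?_
    rw [mul_pow, Real.sq_sqrt (hxW_nonneg m k h0 h1), sq_abs]
    field_simp
    ring
  rw [h4, ← Finset.mul_sum, hxW_variance]
  field_simp

/-- positive-part increments -/
def hxA (m j : ℕ) (s : ℝ) : ℝ := max 0 (((j+1 : ℕ):ℝ)/m - s) - max 0 ((j:ℝ)/m - s)
/-- negative-part increments -/
def hxB (m j : ℕ) (s : ℝ) : ℝ := max 0 (s - (j:ℝ)/m) - max 0 (s - ((j+1 : ℕ):ℝ)/m)

lemma hx_bracket (m : ℕ) (hm : 0 < m) {s : ℝ} (h0 : 0 ≤ s) (h1 : s ≤ 1) :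
    ∑ j ∈ Finset.range m, (hxA m j s * hxS m j s + hxB m j s * (1 - hxS m j s))
      ≤ Real.sqrt (s * (1 - s)) * ((m : ℝ) ^ (-(1:ℝ)/2)) := by
  have hm' : (0:ℝ) < m := by exact_mod_cast hm
  refine le_trans (le_of_eq ?_) (hx_meanabs m hm h0 h1)
  have e1 : ∀ j, hxA m j s * hxS m j s + hxB m j s * (1 - hxS m j s) =
      ∑ k ∈ Finset.range (m+1), (if j < k then hxA m j s else hxB m j s) * hxW m k s := by
    intro j
    rw [← hxW_sum m s, hxS, ← Finset.sum_sub_distrib, Finset.mul_sum, Finset.mul_sum,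
      ← Finset.sum_add_distrib]
    refine Finset.sum_congr rfl fun k _ => ?_
    split_ifs <;> ring
  simp_rw [e1]
  rw [Finset.sum_comm]
  refine Finset.sum_congr rfl fun k hk => ?_
  rw [← Finset.sum_mul]
  congr 1
  have := hx_telescope (fun j => max 0 ((j:ℝ)/m - s)) (fun j => max 0 (s - (j:ℝ)/m)) k m
    (by have := Finset.mem_range.1 hk; omega)
  simp only [hxA, hxB]
  rw [this]
  rw [div_self hm'.ne', max_eq_left (a := (0:ℝ)) (b := s - 1) (by linarith)]
  rw [max_eq_left (a := (0:ℝ)) (b := ((0:ℕ):ℝ)/m - s) (by simp; linarith)]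
  rcases le_total ((k:ℝ)/m) s with h | h
  · rw [abs_of_nonpos (by linarith), max_eq_left (by linarith), max_eq_right (by linarith)]; ring
  · rw [abs_of_nonneg (by linarith), max_eq_right (by linarith), max_eq_left (by linarith)]; ring

lemma betaDens_nonneg (m j : ℕ) {t : ℝ} (h : t ∈ Icc (0:ℝ) 1) : 0 ≤ betaDens m j t := by
  have h0 := h.1
  have : 0 ≤ 1 - t := by linarith [h.2]
  unfold betaDens
  positivity

lemma betaDens_cont (m j : ℕ) : Continuous (betaDens m j) := by
  unfold betaDens
  fun_prop

lemma hx_int_beta (m j : ℕ) (hj : j < m) {a b : ℝ} (hab : a ≤ b) :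
    ∫ t in Ioo a b, betaDens m (j+1) t = hxS m j b - hxS m j a := by
  rw [← integral_Ioc_eq_integral_Ioo, ← intervalIntegral.integral_of_le hab]
  exact intervalIntegral.integral_eq_sub_of_hasDerivAt (fun x _ => hxS_deriv m j hj x)
    ((betaDens_cont m (j+1)).intervalIntegrable _ _)

lemma hx_beta_integrable (m j : ℕ) (a b : ℝ) :
    IntegrableOn (betaDens m j) (Ioo a b) :=
  ((betaDens_cont m j).continuousOn.integrableOn_Icc).mono_set Ioo_subset_Icc_self

lemma hx_lint_beta (m j : ℕ) (hj : j < m) {a b : ℝ} (ha : 0 ≤ a) (hab : a ≤ b) (hb : b ≤ 1) :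
    ∫⁻ t in Ioo a b, ENNReal.ofReal (betaDens m (j+1) t)
      = ENNReal.ofReal (hxS m j b - hxS m j a) := by
  rw [← hx_int_beta m j hj hab]
  refine (ofReal_integral_eq_lintegral_ofReal (hx_beta_integrable m (j+1) a b) ?_).symm
  refine (ae_restrict_iff' measurableSet_Ioo).2 (Eventually.of_forall fun t ht => ?_)
  exact betaDens_nonneg m (j+1) ⟨by linarith [ht.1], by linarith [ht.2]⟩

open Classical in
/-- kernel: `s` lies between `t` and `u` -/
def hxK (s t u : ℝ) : ENNReal := if (t < s ∧ s ≤ u) ∨ (u < s ∧ s ≤ t) then 1 else 0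

lemma hxK_meas : Measurable fun p : ℝ × ℝ × ℝ => hxK p.1 p.2.1 p.2.2 := by
  have a1 : Measurable fun p : ℝ × ℝ × ℝ => p.1 := by fun_prop
  have a2 : Measurable fun p : ℝ × ℝ × ℝ => p.2.1 := by fun_prop
  have a3 : Measurable fun p : ℝ × ℝ × ℝ => p.2.2 := by fun_prop
  unfold hxK
  refine Measurable.ite ?_ measurable_const measurable_const
  exact ((measurableSet_lt a2 a1).inter (measurableSet_le a1 a3)).union
    ((measurableSet_lt a3 a1).inter (measurableSet_le a1 a2))

lemma hx_inner (m j : ℕ) (hj : j < m) {s : ℝ} (hs : s ∈ Ioo (0:ℝ) 1) (u : ℝ) :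
    ∫⁻ t in Ioo (0:ℝ) 1, hxK s t u * ENNReal.ofReal (betaDens m (j+1) t)
      ≤ if s ≤ u then ENNReal.ofReal (hxS m j s) else ENNReal.ofReal (1 - hxS m j s) := by
  split_ifs with h
  · have := hx_lint_beta m j hj le_rfl hs.1.le hs.2.le
    rw [hxS_zero, sub_zero] at this
    rw [← this, ← lintegral_indicator measurableSet_Ioo, ← lintegral_indicator measurableSet_Ioo]
    refine lintegral_mono fun t => ?_
    by_cases ht : t ∈ Ioo (0:ℝ) 1
    · rw [indicator_of_mem ht]
      by_cases hts : t < s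
      · rw [indicator_of_mem (show t ∈ Ioo 0 s from ⟨ht.1, hts⟩)]
        simp [hxK, hts, h]
      · have : hxK s t u = 0 := by
          unfold hxK; rw [if_neg]; rintro (h1 | h1)
          · exact hts h1.1
          · linarith [h1.1]
        simp [this]
    · simp [indicator_of_notMem ht]
  · have := hx_lint_beta m j hj hs.1.le hs.2.le le_rfl
    rw [hxS_one m j hj] at this
    rw [← this, ← lintegral_indicator measurableSet_Ioo, ← lintegral_indicator measurableSet_Ioo]
    refine lintegral_mono_ae ?_
    have hne : ∀ᵐ t : ℝ, t ≠ s := by simp [ae_iff]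
    filter_upwards [hne] with t hne
    by_cases ht : t ∈ Ioo (0:ℝ) 1
    · rw [indicator_of_mem ht]
      by_cases hts : s < t
      · rw [indicator_of_mem (show t ∈ Ioo s 1 from ⟨hts, ht.2⟩)]
        push Not at h
        simp [hxK, hts.le, h]
      · have : hxK s t u = 0 := by
          unfold hxK; rw [if_neg]; rintro (h1 | h1)
          · exact h h1.2
          · exact hts (lt_of_le_of_ne h1.2 hne.symm)
        simp [this]
    · simp [indicator_of_notMem ht]

/-- the open cells -/
def hxI (m j : ℕ) : Set ℝ := Ioo ((j:ℝ)/m) (((j+1:ℕ):ℝ)/m)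

lemma hxI_meas (m j : ℕ) : MeasurableSet (hxI m j) := measurableSet_Ioo

lemma hxI_sub (m j : ℕ) (hj : j < m) : hxI m j ⊆ Ioo (0:ℝ) 1 := by
  have hm' : (0:ℝ) < m := by exact_mod_cast (by omega : 0 < m)
  apply Ioo_subset_Ioo
  · positivity
  · rw [div_le_one hm']; exact_mod_cast hj

lemma hxS_nonneg (m j : ℕ) {s : ℝ} (hs : s ∈ Ioo (0:ℝ) 1) : 0 ≤ hxS m j s :=
  Finset.sum_nonneg fun k _ => by
    split_ifs
    · exact hxW_nonneg m k hs.1.le hs.2.le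
    · exact le_rfl

lemma hxS_le_one (m j : ℕ) {s : ℝ} (hs : s ∈ Ioo (0:ℝ) 1) : hxS m j s ≤ 1 := by
  rw [← hxW_sum m s]
  refine Finset.sum_le_sum fun k _ => ?_
  split_ifs
  · exact le_rfl
  · exact hxW_nonneg m k hs.1.le hs.2.le

lemma hxA_nonneg (m j : ℕ) (s : ℝ) : 0 ≤ hxA m j s := by
  unfold hxA
  have : (j:ℝ)/m ≤ ((j+1:ℕ):ℝ)/m := by gcongr; omega
  exact sub_nonneg.2 (max_le_max le_rfl (by linarith))

lemma hxB_nonneg (m j : ℕ) (s : ℝ) : 0 ≤ hxB m j s := by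
  unfold hxB
  have : (j:ℝ)/m ≤ ((j+1:ℕ):ℝ)/m := by gcongr; omega
  exact sub_nonneg.2 (max_le_max le_rfl (by linarith))

lemma hx_cell (m j : ℕ) (hj : j < m) {s : ℝ} (hs : s ∈ Ioo (0:ℝ) 1) :
    ∫⁻ u in hxI m j, ∫⁻ t in Ioo (0:ℝ) 1, hxK s t u * ENNReal.ofReal (betaDens m (j+1) t)
      ≤ ENNReal.ofReal (hxA m j s * hxS m j s + hxB m j s * (1 - hxS m j s)) := by
  have h1 : (0:ℝ) ≤ 1 - hxS m j s := by linarith [hxS_le_one m j hs]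
  have hab : (j:ℝ)/m ≤ ((j+1:ℕ):ℝ)/m := by gcongr; omega
  calc _ ≤ ∫⁻ u in hxI m j, ((Ici s).indicator (fun _ => ENNReal.ofReal (hxS m j s)) u +
            (Iio s).indicator (fun _ => ENNReal.ofReal (1 - hxS m j s)) u) := by
        refine lintegral_mono fun u => (hx_inner m j hj hs u).trans ?_
        by_cases h : s ≤ u
        · simp [h]
        · push Not at h
          simp [h, not_le.2 h]
    _ = ENNReal.ofReal (hxS m j s) * volume (Ici s ∩ hxI m j) +
          ENNReal.ofReal (1 - hxS m j s) * volume (Iio s ∩ hxI m j) := by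
        rw [lintegral_add_left (measurable_const.indicator measurableSet_Ici),
          lintegral_indicator_const measurableSet_Ici, lintegral_indicator_const measurableSet_Iio,
          Measure.restrict_apply measurableSet_Ici, Measure.restrict_apply measurableSet_Iio]
    _ ≤ ENNReal.ofReal (hxS m j s) * ENNReal.ofReal (hxA m j s) +
          ENNReal.ofReal (1 - hxS m j s) * ENNReal.ofReal (hxB m j s) := by
        gcongr
        · refine (measure_mono (t := Ico (max s ((j:ℝ)/m)) (((j+1:ℕ):ℝ)/m)) ?_).trans ?_
          · rintro u ⟨hu, hu1, hu2⟩
            exact ⟨max_le hu hu1.le, hu2⟩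
          · rw [Real.volume_Ico]
            apply ENNReal.ofReal_le_ofReal
            unfold hxA
            generalize (j:ℝ)/m = a at *
            generalize ((j+1:ℕ):ℝ)/m = b at *
            rcases max_cases s a with h | h <;> rcases max_cases 0 (b - s) with h' | h' <;>
            rcases max_cases 0 (a - s) with h'' | h'' <;> linarith
        · refine (measure_mono (t := Ioo ((j:ℝ)/m) (min s (((j+1:ℕ):ℝ)/m))) ?_).trans ?_
          · rintro u ⟨hu, hu1, hu2⟩
            exact ⟨hu1, lt_min hu hu2⟩
          · rw [Real.volume_Ioo]
            apply ENNReal.ofReal_le_ofReal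
            unfold hxB
            generalize (j:ℝ)/m = a at *
            generalize ((j+1:ℕ):ℝ)/m = b at *
            rcases min_cases s b with h | h <;> rcases max_cases 0 (s - b) with h' | h' <;>
            rcases max_cases 0 (s - a) with h'' | h'' <;> linarith
    _ = _ := by
        rw [← ENNReal.ofReal_mul (hxS_nonneg m j hs), ← ENNReal.ofReal_mul h1,
          ← ENNReal.ofReal_add (mul_nonneg (hxS_nonneg m j hs) (hxA_nonneg m j s))
            (mul_nonneg h1 (hxB_nonneg m j s))]
        congr 1; ring

lemma hx_swap (m : ℕ) (hm : 0 < m) (g : ℝ → ENNReal) (hg : Measurable g) :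
    ∑ j ∈ Finset.range m, ∫⁻ u in hxI m j, ∫⁻ t in Ioo (0:ℝ) 1,
      (∫⁻ s in Ioo (0:ℝ) 1, hxK s t u * g s) * ENNReal.ofReal (betaDens m (j+1) t)
    ≤ (∫⁻ s in Ioo (0:ℝ) 1, g s * ENNReal.ofReal (Real.sqrt (s * (1 - s)))) *
        ENNReal.ofReal ((m : ℝ) ^ (-(1:ℝ)/2)) := by
  have hf : ∀ j, Measurable fun t => ENNReal.ofReal (betaDens m j t) := fun j =>
    (betaDens_cont m j).measurable.ennreal_ofReal
  have h1 : ∀ j, ∫⁻ u in hxI m j, ∫⁻ t in Ioo (0:ℝ) 1,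
      (∫⁻ s in Ioo (0:ℝ) 1, hxK s t u * g s) * ENNReal.ofReal (betaDens m (j+1) t) =
      ∫⁻ s in Ioo (0:ℝ) 1, g s * ∫⁻ u in hxI m j, ∫⁻ t in Ioo (0:ℝ) 1,
        hxK s t u * ENNReal.ofReal (betaDens m (j+1) t) := by
    intro j
    have e1 : ∀ u, ∫⁻ t in Ioo (0:ℝ) 1,
      (∫⁻ s in Ioo (0:ℝ) 1, hxK s t u * g s) * ENNReal.ofReal (betaDens m (j+1) t) =
      ∫⁻ s in Ioo (0:ℝ) 1, g s * ∫⁻ t in Ioo (0:ℝ) 1,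
        hxK s t u * ENNReal.ofReal (betaDens m (j+1) t) := by
      intro u
      have m1 : Measurable fun p : ℝ × ℝ => hxK p.2 p.1 u :=
        hxK_meas.comp (f := fun p : ℝ × ℝ => (p.2, p.1, u)) (by fun_prop)
      calc _ = ∫⁻ t in Ioo (0:ℝ) 1, ∫⁻ s in Ioo (0:ℝ) 1,
              hxK s t u * g s * ENNReal.ofReal (betaDens m (j+1) t) := by
            refine lintegral_congr fun t => ?_
            rw [lintegral_mul_const]
            exact (m1.comp (measurable_const.prodMk measurable_id)).mul hg
        _ = ∫⁻ s in Ioo (0:ℝ) 1, ∫⁻ t in Ioo (0:ℝ) 1,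
              hxK s t u * g s * ENNReal.ofReal (betaDens m (j+1) t) := by
            apply lintegral_lintegral_swap
            exact ((m1.mul (hg.comp measurable_snd)).mul ((hf _).comp measurable_fst)).aemeasurable
        _ = _ := by
            refine lintegral_congr fun s => ?_
            rw [← lintegral_const_mul]
            · refine lintegral_congr fun t => by ring
            · exact (m1.comp (measurable_id.prodMk measurable_const)).mul (hf _)
    simp_rw [e1]
    have m2 : Measurable fun p : (ℝ × ℝ) × ℝ =>
        hxK p.1.2 p.2 p.1.1 * ENNReal.ofReal (betaDens m (j+1) p.2) :=
      (hxK_meas.comp (f := fun p : (ℝ × ℝ) × ℝ => (p.1.2, p.2, p.1.1)) (by fun_prop)).mul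
        ((hf _).comp measurable_snd)
    have m3 : Measurable fun p : ℝ × ℝ => ∫⁻ t in Ioo (0:ℝ) 1,
        hxK p.2 t p.1 * ENNReal.ofReal (betaDens m (j+1) t) := m2.lintegral_prod_right'
    rw [lintegral_lintegral_swap]
    · refine lintegral_congr fun s => ?_
      rw [lintegral_const_mul]
      exact m3.comp (measurable_id.prodMk measurable_const)
    · exact ((hg.comp measurable_snd).mul m3).aemeasurable
  simp_rw [h1]
  have m4 : ∀ j, Measurable fun s => g s * ∫⁻ u in hxI m j, ∫⁻ t in Ioo (0:ℝ) 1,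
        hxK s t u * ENNReal.ofReal (betaDens m (j+1) t) := by
    intro j
    have m2 : Measurable fun p : (ℝ × ℝ) × ℝ =>
        hxK p.1.1 p.2 p.1.2 * ENNReal.ofReal (betaDens m (j+1) p.2) :=
      (hxK_meas.comp (f := fun p : (ℝ × ℝ) × ℝ => (p.1.1, p.2, p.1.2)) (by fun_prop)).mul
        ((hf _).comp measurable_snd)
    have m3 : Measurable fun p : ℝ × ℝ => ∫⁻ t in Ioo (0:ℝ) 1,
        hxK p.1 t p.2 * ENNReal.ofReal (betaDens m (j+1) t) := m2.lintegral_prod_right'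
    exact hg.mul m3.lintegral_prod_right'
  rw [← lintegral_finsetSum _ fun j _ => m4 j, ← lintegral_mul_const' _ _ ENNReal.ofReal_ne_top]
  refine setLIntegral_mono' measurableSet_Ioo fun s hs => ?_
  rw [← Finset.mul_sum, mul_assoc]
  gcongr
  rw [← ENNReal.ofReal_mul (Real.sqrt_nonneg _)]
  refine le_trans (Finset.sum_le_sum fun j hj => hx_cell m j (Finset.mem_range.1 hj) hs) ?_
  rw [← ENNReal.ofReal_sum_of_nonneg]
  · exact ENNReal.ofReal_le_ofReal (hx_bracket m hm hs.1.le hs.2.le)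
  · intro j _
    have h1 : (0:ℝ) ≤ 1 - hxS m j s := by linarith [hxS_le_one m j hs]
    exact add_nonneg (mul_nonneg (hxA_nonneg m j s) (hxS_nonneg m j hs))
      (mul_nonneg (hxB_nonneg m j s) h1)

lemma hx_jensen (Q : ℝ → ℝ) (hQ : AEStronglyMeasurable Q (volume.restrict (Ioo (0:ℝ) 1)))
    (m j : ℕ) (hj : j < m) (c : ℝ) :
    ‖(∫ t in Ioo (0:ℝ) 1, Q t * betaDens m (j+1) t) - c‖ₑ
      ≤ ∫⁻ t in Ioo (0:ℝ) 1, ‖Q t - c‖ₑ * ENNReal.ofReal (betaDens m (j+1) t) := by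
  have e : ∫⁻ t in Ioo (0:ℝ) 1, ‖Q t - c‖ₑ * ENNReal.ofReal (betaDens m (j+1) t) =
      ∫⁻ t in Ioo (0:ℝ) 1, ‖(Q t - c) * betaDens m (j+1) t‖ₑ := by
    refine setLIntegral_congr_fun measurableSet_Ioo fun t ht => ?_
    rw [enorm_mul, Real.enorm_of_nonneg (betaDens_nonneg m (j+1) ⟨ht.1.le, ht.2.le⟩)]
  rw [e]
  by_cases hfin : ∫⁻ t in Ioo (0:ℝ) 1, ‖(Q t - c) * betaDens m (j+1) t‖ₑ = ⊤
  · rw [hfin]; exact le_top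
  have hi : Integrable (fun t => (Q t - c) * betaDens m (j+1) t) (volume.restrict (Ioo (0:ℝ) 1)) :=
    ⟨(hQ.sub aestronglyMeasurable_const).mul (betaDens_cont m (j+1)).aestronglyMeasurable,
      lt_top_iff_ne_top.2 hfin⟩
  have hb : Integrable (fun t => c * betaDens m (j+1) t) (volume.restrict (Ioo (0:ℝ) 1)) :=
    Integrable.const_mul (hx_beta_integrable m (j+1) 0 1) c
  have e2 : (∫ t in Ioo (0:ℝ) 1, Q t * betaDens m (j+1) t) - c =
      ∫ t in Ioo (0:ℝ) 1, (Q t - c) * betaDens m (j+1) t := by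
    have : ∫ t in Ioo (0:ℝ) 1, Q t * betaDens m (j+1) t =
        ∫ t in Ioo (0:ℝ) 1, ((Q t - c) * betaDens m (j+1) t + c * betaDens m (j+1) t) := by
      congr 1; ext t; ring
    rw [this, integral_add hi hb, integral_const_mul, hx_int_beta m j hj zero_le_one,
      hxS_one m j hj, hxS_zero]
    ring
  rw [e2]
  exact enorm_integral_le_lintegral_enorm _

lemma hx_step_dist (a b : ℝ) :
    ∫⁻ x : ℝ, ‖(if a ≤ x then (1:ℝ) else 0) - (if b ≤ x then (1:ℝ) else 0)‖ₑ ≤ ‖a - b‖ₑ := by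
  calc _ ≤ ∫⁻ x : ℝ, (uIcc a b).indicator (fun _ => 1) x := by
        refine lintegral_mono fun x => ?_
        by_cases ha : a ≤ x <;> by_cases hb : b ≤ x
        · simp [ha, hb]
        · have : x ∈ uIcc a b := mem_uIcc.2 (Or.inl ⟨ha, (not_le.1 hb).le⟩)
          simp only [ha, hb, if_true, if_false, indicator_of_mem this]; simp
        · have : x ∈ uIcc a b := mem_uIcc.2 (Or.inr ⟨hb, (not_le.1 ha).le⟩)
          simp only [ha, hb, if_true, if_false, indicator_of_mem this]; simp
        · simp [ha, hb]
    _ = volume (uIcc a b) := by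
        rw [lintegral_indicator_const measurableSet_uIcc, one_mul]
    _ = ‖a - b‖ₑ := by
        rw [Real.volume_interval, Real.enorm_eq_ofReal_abs, abs_sub_comm]

lemma hx_cell_int (m j : ℕ) (c : ℝ) :
    ∫ u in hxI m j, (if u ≤ c then (1:ℝ) else 0) = hxB m j c := by
  have hab : (j:ℝ)/m ≤ ((j+1:ℕ):ℝ)/m := by gcongr; omega
  have e : (fun u : ℝ => if u ≤ c then (1:ℝ) else 0) = (Iic c).indicator (fun _ => (1:ℝ)) := by
    ext u; simp [indicator_apply]
  rw [e, setIntegral_indicator measurableSet_Iic, setIntegral_const, smul_eq_mul, mul_one]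
  unfold hxI hxB
  generalize (j:ℝ)/m = a at *
  generalize ((j+1:ℕ):ℝ)/m = b at *
  rcases lt_or_ge c b with h | h
  · have : Ioo a b ∩ Iic c = Ioc a c := by
      ext u; simp only [mem_inter_iff, mem_Ioo, mem_Iic, mem_Ioc]
      constructor
      · rintro ⟨⟨h1, h2⟩, h3⟩; exact ⟨h1, h3⟩
      · rintro ⟨h1, h3⟩; exact ⟨⟨h1, by linarith⟩, h3⟩
    rw [this, Real.volume_real_Ioc, max_eq_left (a := (0:ℝ)) (b := c - b) (by linarith), max_comm]
    ring
  · have : Ioo a b ∩ Iic c = Ioo a b :=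
      inter_eq_left.2 fun u hu => by simp only [mem_Iic]; linarith [hu.2]
    rw [this, Real.volume_real_Ioo_of_le hab, max_eq_right (by linarith), max_eq_right (by linarith)]
    ring

lemma hx_cell_int_const (m j : ℕ) (c : ℝ) : ∫ _ in hxI m j, c = (m:ℝ)⁻¹ * c := by
  have hab : (j:ℝ)/m ≤ ((j+1:ℕ):ℝ)/m := by gcongr; omega
  rw [setIntegral_const, hxI, Real.volume_real_Ioo_of_le hab, smul_eq_mul]
  congr 1
  push_cast
  ring

lemma hx_coupling {F : ℝ → ℝ} (hF : IsCDF F) (m : ℕ) (hm : 0 < m) :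
    ∫⁻ x : ℝ, ‖hoeffCDF m F x - F x‖ₑ ≤
      ∑ j ∈ Finset.range m, ∫⁻ u in hxI m j, ‖muOS m (j+1) F - quantile F u‖ₑ := by
  have hm' : (0:ℝ) < m := by exact_mod_cast hm
  let D : ℕ → ℝ → ℝ → ℝ := fun j x u =>
    (if muOS m (j+1) F ≤ x then (1:ℝ) else 0) - (if u ≤ F x then (1:ℝ) else 0)
  have hF0 : ∀ x, 0 ≤ F x := fun x => hF.mono.le_of_tendsto hF.tendsto_atBot x
  have hF1 : ∀ x, F x ≤ 1 := fun x => hF.mono.ge_of_tendsto hF.tendsto_atTop x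
  have hDm : ∀ j, Measurable fun p : ℝ × ℝ => D j p.1 p.2 := by
    intro j
    refine Measurable.sub ?_ ?_
    · exact Measurable.ite (measurableSet_le measurable_const measurable_fst)
        measurable_const measurable_const
    · exact Measurable.ite (measurableSet_le measurable_snd (hF.mono.measurable.comp measurable_fst))
        measurable_const measurable_const
  have hpt : ∀ x, hoeffCDF m F x - F x = ∑ j ∈ Finset.range m, ∫ u in hxI m j, D j x u := by
    intro x
    have hFx : F x = ∑ j ∈ Finset.range m, hxB m j (F x) := by
      have := hx_telescope (fun _ => 0) (fun j => max 0 (F x - (j:ℝ)/m)) 0 m hm.le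
      simp only [Nat.not_lt_zero, if_false] at this
      simp only [hxB]
      rw [this, div_self hm'.ne', max_eq_left (a := (0:ℝ)) (b := F x - 1) (by linarith [hF1 x])]
      simp [hF0 x]
    have hH : hoeffCDF m F x = ∑ j ∈ Finset.range m,
        (m:ℝ)⁻¹ * (if muOS m (j+1) F ≤ x then (1:ℝ) else 0) := by
      unfold hoeffCDF
      rw [← Finset.mul_sum]
      congr 1
      rw [← Finset.sum_image (s := Finset.range m) (g := fun j => j + 1)
        (f := fun j => if muOS m j F ≤ x then (1:ℝ) else 0) (by intro a _ b _ h; simpa using h)]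
      congr 1
      ext k
      simp only [Finset.mem_Icc, Finset.mem_image, Finset.mem_range]
      constructor
      · rintro ⟨h1, h2⟩; exact ⟨k - 1, by omega, by omega⟩
      · rintro ⟨a, h1, rfl⟩; omega
    rw [hH]
    conv_lhs => rw [hFx]
    rw [← Finset.sum_sub_distrib]
    refine Finset.sum_congr rfl fun j _ => ?_
    have hvol : volume (hxI m j) ≠ ⊤ := by simp [hxI]
    have i1 : IntegrableOn (fun u : ℝ => if u ≤ F x then (1:ℝ) else 0) (hxI m j) := by
      refine Measure.integrableOn_of_bounded (M := 1) hvol ?_ ?_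
      · exact (Measurable.ite (measurableSet_le measurable_id measurable_const)
          measurable_const measurable_const).aestronglyMeasurable
      · refine Eventually.of_forall fun u => ?_
        split_ifs <;> simp
    have i2 : IntegrableOn (fun _ : ℝ => if muOS m (j+1) F ≤ x then (1:ℝ) else 0) (hxI m j) :=
      integrableOn_const hvol
    rw [← hx_cell_int_const m j, ← hx_cell_int, ← integral_sub i2 i1]
  calc _ ≤ ∫⁻ x : ℝ, ∑ j ∈ Finset.range m, ∫⁻ u in hxI m j, ‖D j x u‖ₑ := by
        refine lintegral_mono fun x => ?_
        simp only [hpt]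
        refine (enorm_sum_le _ _).trans (Finset.sum_le_sum fun j _ => ?_)
        exact enorm_integral_le_lintegral_enorm _
    _ = ∑ j ∈ Finset.range m, ∫⁻ x : ℝ, ∫⁻ u in hxI m j, ‖D j x u‖ₑ := by
        rw [lintegral_finsetSum]
        intro j _
        exact (hDm j).enorm.lintegral_prod_right'
    _ ≤ _ := by
        refine Finset.sum_le_sum fun j hj => ?_
        rw [lintegral_lintegral_swap (hDm j).enorm.aemeasurable]
        refine setLIntegral_mono' (hxI_meas m j) fun u hu => ?_
        have hu' := hxI_sub m j (Finset.mem_range.1 hj) hu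
        refine le_trans (le_of_eq ?_) (hx_step_dist (muOS m (j+1) F) (quantile F u))
        refine lintegral_congr fun x => ?_
        simp only [D, hx_quantile_le_iff hF hu' x]

lemma hx_incr {Q q : ℝ → ℝ} {g : ℝ → ENNReal}
    (hg : (fun s => ‖q s‖ₑ) =ᵐ[volume.restrict (Ioo (0:ℝ) 1)] g)
    (hQ : ∀ a b : ℝ, 0 < a → a ≤ b → b < 1 → Q b - Q a = ∫ u in a..b, q u)
    {a b : ℝ} (ha : 0 < a) (hab : a ≤ b) (hb : b < 1) :
    ‖Q b - Q a‖ₑ ≤ ∫⁻ s in Ioo (0:ℝ) 1, hxK s a b * g s := by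
  rw [hQ a b ha hab hb, intervalIntegral.integral_of_le hab]
  have hsub : Ioc a b ⊆ Ioo (0:ℝ) 1 := fun s hs => ⟨ha.trans hs.1, hs.2.trans_lt hb⟩
  calc _ ≤ ∫⁻ s in Ioc a b, ‖q s‖ₑ := enorm_integral_le_lintegral_enorm _
    _ = ∫⁻ s in Ioc a b, g s := lintegral_congr_ae (ae_restrict_of_ae_restrict_of_subset hsub hg)
    _ = ∫⁻ s in Ioc a b, hxK s a b * g s := by
        refine setLIntegral_congr_fun measurableSet_Ioc fun s hs => ?_
        simp [hxK, hs.1, hs.2]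
    _ ≤ _ := lintegral_mono_set hsub

lemma hxK_comm (s a b : ℝ) : hxK s a b = hxK s b a := by
  unfold hxK
  simp only [or_comm]

/-- Rate of convergence of `F_m` to `F` in `L¹`: if the quantile function `Q` of `F`
is locally absolutely continuous on (0,1) with a.e. derivative `q ≥ 0` satisfying
`C = ∫₀¹ √(u(1−u)) q(u) du < ∞`, then `‖F_m − F‖₁ ≤ C · m^{−1/2}`. -/
theorem hoeffCDF_L1_rate
    (F : ℝ → ℝ) (hF : IsCDF F) (q : ℝ → ℝ)
    (hq_nonneg : ∀ u ∈ Ioo (0:ℝ) 1, 0 ≤ q u)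
    (hq_int : ∀ a b : ℝ, 0 < a → a ≤ b → b < 1 → IntegrableOn q (Icc a b))
    (hQ : ∀ a b : ℝ, 0 < a → a ≤ b → b < 1 →
      quantile F b - quantile F a = ∫ u in a..b, q u)
    (hC : IntegrableOn (fun u => Real.sqrt (u * (1 - u)) * q u) (Ioo (0:ℝ) 1)) :
    ∀ m : ℕ, 0 < m →
      (∫ x : ℝ, |hoeffCDF m F x - F x|)
        ≤ (∫ u in Ioo (0:ℝ) 1, Real.sqrt (u * (1 - u)) * q u) * ((m : ℝ) ^ (-(1:ℝ)/2)) := by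
  intro m hm
  set C := ∫ u in Ioo (0:ℝ) 1, Real.sqrt (u * (1 - u)) * q u with hCdef
  have hC0 : 0 ≤ C := setIntegral_nonneg measurableSet_Ioo fun u hu =>
    mul_nonneg (Real.sqrt_nonneg _) (hq_nonneg u hu)
  have hr0 : (0:ℝ) ≤ (m : ℝ) ^ (-(1:ℝ)/2) := Real.rpow_nonneg (Nat.cast_nonneg m) _
  -- measurability of `q` on `(0,1)`
  have hsq : ∀ u ∈ Ioo (0:ℝ) 1, 0 < Real.sqrt (u * (1 - u)) := fun u hu =>
    Real.sqrt_pos.2 (mul_pos hu.1 (by linarith [hu.2]))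
  have hqm : AEMeasurable q (volume.restrict (Ioo (0:ℝ) 1)) := by
    have h1 : AEMeasurable (fun u => (Real.sqrt (u * (1 - u)))⁻¹ * (Real.sqrt (u * (1 - u)) * q u))
        (volume.restrict (Ioo (0:ℝ) 1)) :=
      AEMeasurable.mul (Measurable.aemeasurable (by fun_prop)) hC.aestronglyMeasurable.aemeasurable
    refine h1.congr ((ae_restrict_iff' measurableSet_Ioo).2 (Eventually.of_forall fun u hu => ?_))
    have := (hsq u hu).ne'
    simp only
    field_simp
  have hqe : AEMeasurable (fun u => ‖q u‖ₑ) (volume.restrict (Ioo (0:ℝ) 1)) := hqm.enorm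
  set g := hqe.mk _ with hgdef
  have hgm : Measurable g := hqe.measurable_mk
  have hgq : (fun u => ‖q u‖ₑ) =ᵐ[volume.restrict (Ioo (0:ℝ) 1)] g := hqe.ae_eq_mk
  have hgC : ∫⁻ s in Ioo (0:ℝ) 1, g s * ENNReal.ofReal (Real.sqrt (s * (1 - s)))
      = ENNReal.ofReal C := by
    rw [hCdef, ofReal_integral_eq_lintegral_ofReal hC
      ((ae_restrict_iff' measurableSet_Ioo).2 (Eventually.of_forall fun u hu =>
        mul_nonneg (Real.sqrt_nonneg _) (hq_nonneg u hu)))]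
    refine lintegral_congr_ae ?_
    filter_upwards [hgq, ae_restrict_mem measurableSet_Ioo] with s hs hs1
    rw [← hs, ENNReal.ofReal_mul (Real.sqrt_nonneg _), Real.enorm_of_nonneg (hq_nonneg s hs1),
      mul_comm]
  -- monotonicity and measurability of the quantile function
  have hmono : MonotoneOn (quantile F) (Ioo (0:ℝ) 1) := by
    intro a ha b hb hab
    have := hQ a b ha.1 hab hb.2
    have h2 : 0 ≤ ∫ u in a..b, q u := intervalIntegral.integral_nonneg hab fun u hu =>
      hq_nonneg u ⟨by linarith [ha.1, hu.1], by linarith [hb.2, hu.2]⟩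
    linarith
  have hQm : AEStronglyMeasurable (quantile F) (volume.restrict (Ioo (0:ℝ) 1)) :=
    (aemeasurable_restrict_of_monotoneOn measurableSet_Ioo hmono).aestronglyMeasurable
  have hinc : ∀ t ∈ Ioo (0:ℝ) 1, ∀ u ∈ Ioo (0:ℝ) 1,
      ‖quantile F t - quantile F u‖ₑ ≤ ∫⁻ s in Ioo (0:ℝ) 1, hxK s t u * g s := by
    intro t ht u hu
    rcases le_total t u with h | h
    · rw [← enorm_neg, neg_sub]
      exact hx_incr hgq hQ ht.1 h hu.2
    · simp_rw [hxK_comm _ t u]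
      exact hx_incr hgq hQ hu.1 h ht.2
  have key : ∫⁻ x : ℝ, ‖hoeffCDF m F x - F x‖ₑ ≤ ENNReal.ofReal (C * (m : ℝ) ^ (-(1:ℝ)/2)) := by
    rw [ENNReal.ofReal_mul hC0, ← hgC]
    refine (hx_coupling hF m hm).trans (le_trans ?_ (hx_swap m hm g hgm))
    refine Finset.sum_le_sum fun j hj => ?_
    have hj' := Finset.mem_range.1 hj
    refine setLIntegral_mono' (hxI_meas m j) fun u hu => ?_
    refine (hx_jensen (quantile F) hQm m j hj' (quantile F u)).trans ?_
    refine setLIntegral_mono' measurableSet_Ioo fun t ht => ?_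
    gcongr
    exact hinc t ht u (hxI_sub m j hj' hu)
  have h3 : ‖∫ x : ℝ, |hoeffCDF m F x - F x|‖ₑ ≤ ∫⁻ x : ℝ, ‖hoeffCDF m F x - F x‖ₑ := by
    refine (enorm_integral_le_lintegral_enorm _).trans (le_of_eq ?_)
    refine lintegral_congr fun x => ?_
    rw [← Real.norm_eq_abs, enorm_norm]
  have h4 := h3.trans key
  rw [Real.enorm_of_nonneg (integral_nonneg fun x => abs_nonneg _)] at h4
  exact (ENNReal.ofReal_le_ofReal_iff (mul_nonneg hC0 hr0)).1 h4
end
end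

section
/- Let m be a positive integer, let a₁ < a₂ < … < a_m be real numbers with minimal gap δ = min_{1≤j≤m−1} (a_{j+1} − a_j), and let b₁, …, b_m be real numbers with max_{1≤j≤m} |a_j − b_j| < δ/2. Define the step CDFs A(x) = (1/m) ∑_{j=1}^m 1{a_j ≤ x} and B(x) = (1/m) ∑_{j=1}^m 1{b_j ≤ x}. Then for every p ∈ [1, ∞), ∫_ℝ |A(x) − B(x)|^p dx = m^{−p} ∑_{j=1}^m |a_j − b_j|. -/
open MeasureTheory Filter Set
open scoped BoundedContinuousFunction ProbabilityTheory

noncomputable section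

lemma ite_sub_abs (a b x : ℝ) :
    |(if a ≤ x then (1:ℝ) else 0) - (if b ≤ x then (1:ℝ) else 0)|
      = (Ico (min a b) (max a b)).indicator (fun _ => (1:ℝ)) x := by
  by_cases h1 : a ≤ x <;> by_cases h2 : b ≤ x <;>
    simp [Set.indicator, h1, h2]

lemma ite_sub_ne (a b x : ℝ)
    (h : (if a ≤ x then (1:ℝ) else 0) - (if b ≤ x then (1:ℝ) else 0) ≠ 0) :
    min a b ≤ x ∧ x < max a b := by
  by_cases h1 : a ≤ x <;> by_cases h2 : b ≤ x <;> simp_all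

lemma abs_sum_rpow (m : ℕ) (g : ℕ → ℝ) (p : ℝ) (hp : 1 ≤ p)
    (h01 : ∀ j, |g j| = 0 ∨ |g j| = 1)
    (h : ∀ i < m, ∀ j < m, i ≠ j → g i ≠ 0 → g j = 0) :
    |∑ j ∈ Finset.range m, g j| ^ p = ∑ j ∈ Finset.range m, |g j| := by
  by_cases hz : ∃ i < m, g i ≠ 0
  · obtain ⟨i, hi, hg⟩ := hz
    rw [Finset.sum_eq_single_of_mem i (Finset.mem_range.2 hi)
        (fun j hj hji => h i hi j (Finset.mem_range.1 hj) hji.symm hg),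
      Finset.sum_eq_single_of_mem i (Finset.mem_range.2 hi)
        (fun j hj hji => by rw [h i hi j (Finset.mem_range.1 hj) hji.symm hg, abs_zero])]
    rcases h01 i with h0 | h1
    · exact absurd (abs_eq_zero.1 h0) hg
    · rw [h1, Real.one_rpow]
  · push Not at hz
    rw [Finset.sum_eq_zero (fun j hj => hz j (Finset.mem_range.1 hj)),
      Finset.sum_eq_zero (fun j hj => by rw [hz j (Finset.mem_range.1 hj), abs_zero]),
      abs_zero, Real.zero_rpow (by linarith)]

/-- If two step CDFs assign mass `1/m` to points `a_j` (strictly increasing) and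
`b_j`, where each `|a_j − b_j|` is less than half the minimal gap of the `a_j`, then
`∫ |A − B|^p = m^{−p} ∑_j |a_j − b_j|` for every `p ∈ [1, ∞)`. -/
theorem step_cdf_Lp_distance
    (m : ℕ) (hm : 0 < m) (a b : ℕ → ℝ)
    (ha : ∀ i : ℕ, i + 1 < m → a i < a (i + 1))
    (hclose : ∀ j < m, ∀ i : ℕ, i + 1 < m → |a j - b j| < (a (i + 1) - a i) / 2)
    (p : ℝ) (hp : 1 ≤ p) :
    (∫ x : ℝ, |ecdf m a x - ecdf m b x| ^ p)
      = ((m : ℝ) ^ p)⁻¹ * ∑ j ∈ Finset.range m, |a j - b j| := by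
  have hmono : ∀ i j : ℕ, i ≤ j → j < m → a i ≤ a j := by
    intro i j hij
    induction j, hij using Nat.le_induction with
    | base => intro _; exact le_rfl
    | succ k hk ih => intro hkm; exact (ih (by omega)).trans (ha k hkm).le
  have hsep : ∀ i j : ℕ, i < j → j < m → max (a i) (b i) < min (a j) (b j) := by
    intro i j hij hj
    have h1 := hclose i (by omega) i (by omega)
    have h2 := hclose j hj i (by omega)
    have h3 := hmono (i + 1) j hij hj
    have h4 := ha i (by omega)
    rw [abs_lt] at h1 h2
    rw [max_lt_iff, lt_min_iff, lt_min_iff]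
    refine ⟨⟨?_, ?_⟩, ?_, ?_⟩ <;> linarith
  have hpt : ∀ x : ℝ, |ecdf m a x - ecdf m b x| ^ p = ((m : ℝ) ^ p)⁻¹ *
      ∑ j ∈ Finset.range m,
        (Ico (min (a j) (b j)) (max (a j) (b j))).indicator (fun _ => (1:ℝ)) x := by
    intro x
    unfold ecdf
    rw [← mul_sub, ← Finset.sum_sub_distrib, abs_mul,
      Real.mul_rpow (abs_nonneg _) (abs_nonneg _), abs_of_nonneg (by positivity),
      Real.inv_rpow (by positivity), abs_sum_rpow m _ p hp]
    · simp only [ite_sub_abs]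
    · intro j
      rw [ite_sub_abs]
      exact Set.indicator_eq_zero_or_self _ _ _
    · intro i hi j hj hij hgi
      by_contra hgj
      have h1 := ite_sub_ne _ _ _ hgi
      have h2 := ite_sub_ne _ _ _ hgj
      rcases lt_or_gt_of_ne hij with h | h
      · have := hsep i j h hj
        linarith
      · have := hsep j i h hi
        linarith
  simp_rw [hpt]
  rw [integral_const_mul, integral_finset_sum]
  · congr 1
    refine Finset.sum_congr rfl fun j _ => ?_
    rw [integral_indicator measurableSet_Ico]
    simp [max_sub_min_eq_abs, abs_sub_comm]
  · intro j _
    rw [integrable_indicator_iff measurableSet_Ico]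
    exact integrableOn_const (by simp) (by simp)
end
end

section
/- Let p ∈ [1, ∞), and let ν_n (n ≥ 1) and ν be Borel probability measures on the separable Banach space L^p(0,1) such that ν_n converges weakly to ν as n → ∞. Then the pushforward measures (I_m)_* ν_n converge weakly to ν as n, m → ∞ jointly: for every bounded continuous function φ : L^p(0,1) → ℝ and every ε > 0, there exists N such that |∫ φ(I_m(h)) dν_n(h) − ∫ φ(h) dν(h)| < ε whenever n ≥ N and m ≥ N. In particular, if a sequence of L^p(0,1)-valued random elements Q_n converges weakly (in distribution) to a random element Q, then I_m(Q_n) converges weakly to Q in L^p(0,1) as n, m → ∞. -/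
open MeasureTheory Filter Set
open scoped BoundedContinuousFunction ProbabilityTheory

noncomputable section

/-- Lebesgue measure restricted to the interval (0,1). -/
def measIoo : Measure ℝ := volume.restrict (Ioo (0:ℝ) 1)

lemma aux_weak {E : Type*} [NormedAddCommGroup E] [MeasurableSpace E] [BorelSpace E]
    (ν : ℕ → Measure E) (νlim : Measure E)
    [∀ n, IsProbabilityMeasure (ν n)] [IsProbabilityMeasure νlim]
    (I : ℕ → E → E) (hlip : ∀ m f g, ‖I m f - I m g‖ ≤ ‖f - g‖)
    (hconv : ∀ f, Tendsto (fun m => I m f) atTop (nhds f))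
    (hweak : ∀ φ : E →ᵇ ℝ,
      Tendsto (fun n : ℕ => ∫ h, φ h ∂(ν n)) atTop (nhds (∫ h, φ h ∂νlim))) :
    ∀ φ : E →ᵇ ℝ, ∀ ε > (0:ℝ), ∃ N : ℕ,
      ∀ n m : ℕ, N ≤ n → N ≤ m →
        |(∫ h, φ (I m h) ∂(ν n)) - ∫ h, φ h ∂νlim| < ε := by
  have hcont : ∀ m, Continuous (I m) := fun m =>
    (LipschitzWith.of_dist_le_mul (K := 1) (fun f g => by
      simpa [dist_eq_norm] using hlip m f g)).continuous
  -- the Lipschitz case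
  have key : ∀ (C L : ℝ), 0 < C → 0 < L → ∀ φ : E → ℝ, (∀ x y, |φ x - φ y| ≤ C) →
      (∀ x y, |φ x - φ y| ≤ L * ‖x - y‖) → ∀ ε > (0:ℝ), ∃ N : ℕ,
      ∀ n m : ℕ, N ≤ n → N ≤ m →
        |(∫ h, φ (I m h) ∂(ν n)) - ∫ h, φ h ∂νlim| < ε := by
    intro C L hC hL φ hφC hφL ε hε
    have hφc : Continuous φ :=
      (LipschitzWith.of_dist_le_mul (K := ⟨L, hL.le⟩) (fun f g => by
        rw [Real.dist_eq, dist_eq_norm]; exact hφL f g)).continuous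
    let φb : E →ᵇ ℝ := BoundedContinuousFunction.mkOfBound ⟨φ, hφc⟩ C
      (fun x y => by simpa [Real.dist_eq] using hφC x y)
    have hφb : ∀ x, φb x = φ x := fun x => rfl
    let a : ℕ → E → ℕ → ℝ := fun M h m => min (L * ‖I (M + m) h - h‖) C
    have ha0 : ∀ M h m, 0 ≤ a M h m := fun M h m => le_min (by positivity) hC.le
    have haC : ∀ M h m, a M h m ≤ C := fun M h m => min_le_right _ _
    have hbdd : ∀ M h, BddAbove (range (a M h)) := fun M h =>
      ⟨C, by rintro _ ⟨m, rfl⟩; exact haC M h m⟩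
    let G : ℕ → E → ℝ := fun M h => ⨆ m, a M h m
    have hG0 : ∀ M h, 0 ≤ G M h := fun M h => (ha0 M h 0).trans (le_ciSup (hbdd M h) 0)
    have hGC : ∀ M h, G M h ≤ C := fun M h => ciSup_le (haC M h)
    have hGlip : ∀ M, LipschitzWith ⟨2 * L, by positivity⟩ (G M) := by
      intro M
      apply LipschitzWith.of_le_add_mul
      intro x y
      apply ciSup_le
      intro m
      have h1 : a M y m ≤ G M y := le_ciSup (hbdd M y) m
      have h2 : ‖I (M + m) x - x‖ ≤ ‖I (M + m) y - y‖ + 2 * ‖x - y‖ := by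
        have e : I (M + m) x - x = (I (M + m) x - I (M + m) y) + (I (M + m) y - y) - (x - y) := by
          abel
        have := hlip (M + m) x y
        calc ‖I (M + m) x - x‖ ≤ ‖I (M + m) x - I (M + m) y‖ + ‖I (M + m) y - y‖ + ‖x - y‖ := by
              rw [e]; exact (norm_sub_le _ _).trans (by gcongr; exact norm_add_le _ _)
          _ ≤ _ := by linarith
      have h3 : a M x m ≤ a M y m + 2 * L * dist x y := by
        rw [dist_eq_norm]
        have hp : 0 ≤ 2 * L * ‖x - y‖ := by positivity
        have h2' := mul_le_mul_of_nonneg_left h2 hL.le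
        simp only [a]
        rcases le_total (L * ‖I (M + m) y - y‖) C with hc | hc
        · rw [min_eq_left hc]
          exact (min_le_left _ _).trans (by linarith)
        · rw [min_eq_right hc]
          exact (min_le_right _ _).trans (by linarith)
      show a M x m ≤ G M y + 2 * L * dist x y
      linarith
    have hGlim : ∀ h, Tendsto (fun M => G M h) atTop (nhds 0) := by
      intro h
      rw [Metric.tendsto_atTop]
      intro δ hδ
      have hc := hconv h
      rw [Metric.tendsto_atTop] at hc
      obtain ⟨N, hN⟩ := hc (δ / 2 / L) (by positivity)
      refine ⟨N, fun M hM => ?_⟩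
      rw [Real.dist_eq, sub_zero, abs_of_nonneg (hG0 M h)]
      have : G M h ≤ δ / 2 := by
        apply ciSup_le
        intro m
        refine (min_le_left _ _).trans ?_
        have := hN (M + m) (by omega)
        rw [dist_eq_norm, lt_div_iff₀ hL] at this
        linarith
      linarith
    have hGint : Tendsto (fun M => ∫ h, G M h ∂νlim) atTop (nhds 0) := by
      have := tendsto_integral_of_dominated_convergence (μ := νlim) (F := G) (f := fun _ => (0:ℝ))
        (fun _ => C) (fun M => (hGlip M).continuous.aestronglyMeasurable) (integrable_const C)
        (fun M => ae_of_all _ fun h => by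
          rw [Real.norm_eq_abs, abs_of_nonneg (hG0 M h)]; exact hGC M h)
        (ae_of_all _ hGlim)
      simpa using this
    obtain ⟨M, hM⟩ := (hGint.eventually_lt_const (show (0:ℝ) < ε / 3 by positivity)).exists
    let Gb : E →ᵇ ℝ := BoundedContinuousFunction.mkOfBound ⟨G M, (hGlip M).continuous⟩ C
      (fun x y => by
        have := hG0 M x; have := hG0 M y; have := hGC M x; have := hGC M y
        simp only [ContinuousMap.coe_mk, Real.dist_eq]
        rw [abs_le]; constructor <;> linarith)
    have e1 := (hweak Gb).eventually_lt_const (show (∫ h, Gb h ∂νlim) < ε / 3 from hM)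
    have e2 := (Metric.tendsto_atTop.1 (hweak φb)) (ε / 3) (by positivity)
    obtain ⟨N1, hN1⟩ := eventually_atTop.1 e1
    obtain ⟨N2, hN2⟩ := e2
    refine ⟨max M (max N1 N2), fun n m hn hm => ?_⟩
    have g1 : (∫ h, G M h ∂(ν n)) < ε / 3 := hN1 n (by omega)
    have g2 := hN2 n (by omega)
    rw [Real.dist_eq] at g2
    have i1 : Integrable φ (ν n) := φb.integrable (ν n)
    have i2 : Integrable (fun h => φ (I m h)) (ν n) :=
      (φb.compContinuous ⟨I m, hcont m⟩).integrable (ν n)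
    have i3 : Integrable (G M) (ν n) := Gb.integrable (ν n)
    have g3 : |(∫ h, φ (I m h) ∂(ν n)) - ∫ h, φ h ∂(ν n)| ≤ ∫ h, G M h ∂(ν n) := by
      rw [← integral_sub i2 i1]
      refine (abs_integral_le_integral_abs).trans ?_
      refine integral_mono (i2.sub i1).abs i3 fun h => ?_
      have : a M h (m - M) ≤ G M h := le_ciSup (hbdd M h) (m - M)
      refine le_trans ?_ this
      simp only [a]
      rw [show M + (m - M) = m by omega]
      exact le_min (hφL _ _) (hφC _ _)
    have g4 : |(∫ h, φ h ∂(ν n)) - ∫ h, φ h ∂νlim| < ε / 3 := g2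
    have := abs_sub_le (∫ h, φ (I m h) ∂(ν n)) (∫ h, φ h ∂(ν n)) (∫ h, φ h ∂νlim)
    linarith
  let μs : ℕ × ℕ → ProbabilityMeasure E := fun q =>
    ⟨(ν q.1).map (I q.2), Measure.isProbabilityMeasure_map (hcont q.2).measurable.aemeasurable⟩
  let μ : ProbabilityMeasure E := ⟨νlim, inferInstance⟩
  have hmap : ∀ (q : ℕ × ℕ) (φ : E → ℝ), Continuous φ →
      ∫ h, φ h ∂(μs q : Measure E) = ∫ h, φ (I q.2 h) ∂(ν q.1) := by
    intro q φ hφ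
    exact integral_map (hcont q.2).measurable.aemeasurable hφ.aestronglyMeasurable
  have hT : Tendsto μs atTop (nhds μ) := by
    rw [tendsto_iff_forall_lipschitz_integral_tendsto]
    rintro f ⟨C, hC⟩ ⟨L, hL⟩
    rw [Metric.tendsto_atTop]
    intro ε hε
    obtain ⟨N, hN⟩ := key (|C| + 1) (L + 1) (by positivity) (by positivity) f
      (fun x y => by
        have := hC x y
        rw [Real.dist_eq] at this
        have := le_abs_self C
        linarith)
      (fun x y => by
        have := hL.dist_le_mul x y
        rw [Real.dist_eq, dist_eq_norm] at this
        have := norm_nonneg (x - y)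
        linarith) ε hε
    refine ⟨(N, N), fun q hq => ?_⟩
    rw [hmap q f hL.continuous, Real.dist_eq]
    exact hN q.1 q.2 hq.1 hq.2
  intro φ ε hε
  have h := (ProbabilityMeasure.tendsto_iff_forall_integral_tendsto.1 hT) φ
  rw [Metric.tendsto_atTop] at h
  obtain ⟨⟨N1, N2⟩, hN⟩ := h ε hε
  refine ⟨max N1 N2, fun n m hn hm => ?_⟩
  have := hN (n, m) ⟨by show N1 ≤ n; omega, by show N2 ≤ m; omega⟩
  rw [hmap (n, m) φ φ.continuous, Real.dist_eq] at this
  exact this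

lemma betaDens_nonneg_s19 (m j : ℕ) {u : ℝ} (hu : u ∈ Ioo (0:ℝ) 1) : 0 ≤ betaDens m j u := by
  have h1 := hu.1.le
  have h2 : 0 ≤ 1 - u := by linarith [hu.2]
  unfold betaDens; positivity

lemma betaDens_eq_pdf (a b : ℕ) {u : ℝ} (hu : u ∈ Ioo (0:ℝ) 1) :
    betaDens (a + b + 1) (a + 1) u
      = 1 / ProbabilityTheory.beta (a + 1) (b + 1) * u ^ ((a + 1 : ℝ) - 1)
        * (1 - u) ^ ((b + 1 : ℝ) - 1) := by
  have h1 : ProbabilityTheory.beta (a + 1) (b + 1)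
      = (a.factorial : ℝ) * b.factorial / (a + b + 1).factorial := by
    unfold ProbabilityTheory.beta
    rw [Real.Gamma_nat_eq_factorial, Real.Gamma_nat_eq_factorial,
      show (a + 1 + (b + 1) : ℝ) = ((a + b + 1 : ℕ) : ℝ) + 1 by push_cast; ring,
      Real.Gamma_nat_eq_factorial]
  rw [h1]
  unfold betaDens
  rw [add_sub_cancel_right, add_sub_cancel_right, Real.rpow_natCast, Real.rpow_natCast]
  have h2 : a + b + 1 - 1 = a + b := by omega
  have h3 : a + 1 - 1 = a := by omega
  have h4 : a + b + 1 - (a + 1) = b := by omega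
  rw [h2, h3, h4]
  congr 2
  have h5 := Nat.add_choose_mul_factorial_mul_factorial a b
  have h6 : ((a + b).choose a : ℝ) * a.factorial * b.factorial = (a + b).factorial := by
    rw [Nat.choose_symm_add]
    exact_mod_cast h5
  have h7 : ((a + b + 1).factorial : ℝ) = (a + b + 1) * (a + b).factorial := by
    rw [Nat.factorial_succ]; push_cast; ring
  have ha : (a.factorial : ℝ) ≠ 0 := by positivity
  have hb : (b.factorial : ℝ) ≠ 0 := by positivity
  rw [h7, ← h6]
  field_simp
  push_cast
  ring

lemma betaDens_lintegral (m j : ℕ) (hj : 1 ≤ j) (hjm : j ≤ m) :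
    ∫⁻ t in Ioo (0:ℝ) 1, ENNReal.ofReal (betaDens m j t) = 1 := by
  obtain ⟨a, rfl⟩ : ∃ a, j = a + 1 := ⟨j - 1, by omega⟩
  obtain ⟨b, rfl⟩ : ∃ b, m = a + b + 1 := ⟨m - a - 1, by omega⟩
  have h := ProbabilityTheory.lintegral_betaPDF_eq_one (α := a + 1) (β := b + 1)
    (by positivity) (by positivity)
  rw [ProbabilityTheory.lintegral_betaPDF] at h
  rw [← h]
  refine setLIntegral_congr_fun measurableSet_Ioo fun u hu => ?_
  show ENNReal.ofReal _ = ENNReal.ofReal _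
  rw [betaDens_eq_pdf a b hu]

lemma betaDens_integrable (m j : ℕ) : IntegrableOn (betaDens m j) (Ioo (0:ℝ) 1) :=
  ((betaDens_cont m j).integrableOn_Icc).mono_set Ioo_subset_Icc_self

lemma betaDens_integral (m j : ℕ) (hj : 1 ≤ j) (hjm : j ≤ m) :
    ∫ t in Ioo (0:ℝ) 1, betaDens m j t = 1 := by
  rw [integral_eq_lintegral_of_nonneg_ae, betaDens_lintegral m j hj hjm]
  · simp
  · exact (ae_restrict_iff' measurableSet_Ioo).2 (ae_of_all _ fun u hu => betaDens_nonneg_s19 m j hu)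
  · exact (betaDens_cont m j).aestronglyMeasurable

lemma mul_betaDens (m j : ℕ) (hj : 1 ≤ j) (hjm : j ≤ m) (t : ℝ) :
    t * betaDens m j t = (j : ℝ) / (m + 1) * betaDens (m + 1) (j + 1) t := by
  obtain ⟨a, rfl⟩ : ∃ a, j = a + 1 := ⟨j - 1, by omega⟩
  obtain ⟨b, rfl⟩ : ∃ b, m = a + b + 1 := ⟨m - a - 1, by omega⟩
  unfold betaDens
  have h2 : a + b + 1 - 1 = a + b := by omega
  have h3 : a + 1 - 1 = a := by omega
  have h4 : a + b + 1 - (a + 1) = b := by omega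
  have h5 : a + b + 1 + 1 - 1 = a + b + 1 := by omega
  have h6 : a + 1 + 1 - 1 = a + 1 := by omega
  have h7 : a + b + 1 + 1 - (a + 1 + 1) = b := by omega
  rw [h2, h3, h4, h5, h6, h7]
  have h8 := Nat.add_one_mul_choose_eq (a + b) a
  have h9 : ((a + b : ℝ) + 1) * (a + b).choose a = (a + b + 1).choose (a + 1) * (a + 1) := by
    exact_mod_cast h8
  push_cast
  have h10 : (a + b + 1 + 1 : ℝ) ≠ 0 := by positivity
  rw [h9]
  field_simp
  ring

lemma betaDens_second (m j : ℕ) (hj : 1 ≤ j) (hjm : j ≤ m) (u : ℝ)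
    (hu : u ∈ Ioc (((j : ℝ) - 1) / m) ((j : ℝ) / m)) :
    ∫ t in Ioo (0:ℝ) 1, (t - u) ^ 2 * betaDens m j t ≤ 2 / m := by
  have e : ∀ t, (t - u) ^ 2 * betaDens m j t
      = (j : ℝ) / (m + 1) * ((j + 1) / (m + 2)) * betaDens (m + 2) (j + 2) t
        + (- 2 * u * ((j : ℝ) / (m + 1)) * betaDens (m + 1) (j + 1) t + u ^ 2 * betaDens m j t) := by
    intro t
    have h1 := mul_betaDens m j hj hjm t
    have h2 := mul_betaDens (m + 1) (j + 1) (by omega) (by omega) t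
    push_cast at h2
    rw [show (m + 1 + 1 : ℝ) = m + 2 by ring] at h2
    calc (t - u) ^ 2 * betaDens m j t
        = t * (t * betaDens m j t) - 2 * u * (t * betaDens m j t) + u ^ 2 * betaDens m j t := by ring
      _ = (j : ℝ) / (m + 1) * (t * betaDens (m + 1) (j + 1) t)
          - 2 * u * (t * betaDens m j t) + u ^ 2 * betaDens m j t := by rw [h1]; ring
      _ = _ := by rw [h2, h1]; ring
  simp_rw [e]
  have i : ∀ m j (c : ℝ), Integrable (fun t => c * betaDens m j t) (volume.restrict (Ioo (0:ℝ) 1)) :=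
    fun m j c => (betaDens_integrable m j).const_mul c
  have i2 : ∀ m j (c : ℝ) m' j' (c' : ℝ), Integrable
      (fun t => c * betaDens m j t + c' * betaDens m' j' t) (volume.restrict (Ioo (0:ℝ) 1)) :=
    fun m j c m' j' c' => (i m j c).add (i m' j' c')
  rw [integral_add (i _ _ _) (i2 _ _ _ _ _ _), integral_add (i _ _ _) (i _ _ _)]
  simp only [integral_const_mul]
  rw [betaDens_integral _ _ hj hjm, betaDens_integral (m+1) (j+1) (by omega) (by omega),
    betaDens_integral (m+2) (j+2) (by omega) (by omega)]
  have hj' : (1:ℝ) ≤ j := by exact_mod_cast hj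
  have hjm' : (j:ℝ) ≤ m := by exact_mod_cast hjm
  have hm : (0:ℝ) < m := by linarith
  set x : ℝ := (j : ℝ) / (m + 1) with hx
  have hx0 : 0 ≤ x := by positivity
  have hx1 : x ≤ 1 := by rw [hx, div_le_one (by positivity)]; linarith
  have a1 : x * ((j + 1) / (m + 2)) - x ^ 2 ≤ 1 / m := by
    have : (j + 1 : ℝ) / (m + 2) - x ≤ 1 / m := by
      rw [hx, div_sub_div _ _ (by positivity) (by positivity), div_le_div_iff₀ (by positivity) hm]
      nlinarith
    have h0 : (0:ℝ) ≤ 1 / m := by positivity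
    nlinarith
  have a2 : |x - u| ≤ 1 / m := by
    have b1 : x ≤ j / m := by
      rw [hx]; gcongr; linarith
    have b2 : ((j:ℝ) - 1) / m ≤ x := by
      rw [hx, div_le_div_iff₀ hm (by positivity)]; nlinarith
    have b3 : (j:ℝ) / m - ((j:ℝ) - 1) / m = 1 / m := by ring
    rw [abs_le]; constructor <;> linarith [hu.1, hu.2]
  have a3 : (x - u) ^ 2 ≤ 1 / m := by
    have h1 : (1:ℝ) / m ≤ 1 := by rw [div_le_one hm]; linarith
    have h2 := abs_nonneg (x - u)
    rw [← sq_abs]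
    nlinarith
  have : (2:ℝ) / m = 1 / m + 1 / m := by ring
  rw [this]
  nlinarith

lemma betaDens_sum (m : ℕ) (t : ℝ) : ∑ j ∈ Finset.Icc 1 m, betaDens m j t = m := by
  cases m with
  | zero => simp
  | succ k =>
    have h := (add_pow t (1 - t) k).symm
    rw [add_sub_cancel, one_pow] at h
    rw [← Finset.Ico_add_one_right_eq_Icc, Finset.sum_Ico_eq_sum_range]
    have : ∀ i ∈ Finset.range (k + 1 + 1 - 1), betaDens (k + 1) (1 + i) t
        = ((k + 1 : ℕ) : ℝ) * (t ^ i * (1 - t) ^ (k - i) * k.choose i) := by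
      intro i _
      unfold betaDens
      rw [show k + 1 - 1 = k by omega, show 1 + i - 1 = i by omega,
        show k + 1 - (1 + i) = k - i by omega]
      ring
    rw [Finset.sum_congr rfl this, ← Finset.mul_sum, show k + 1 + 1 - 1 = k + 1 by omega, h, mul_one]

lemma aux_integrable (m j : ℕ) {f : ℝ → ℝ} (hf : Integrable f measIoo) :
    Integrable (fun t => f t * betaDens m j t) (volume.restrict (Ioo (0:ℝ) 1)) := by
  obtain ⟨C, hC⟩ := (isCompact_Icc (a := (0:ℝ)) (b := 1)).exists_bound_of_continuousOn
    (betaDens_cont m j).continuousOn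
  refine Integrable.mul_bdd (c := C) hf (betaDens_cont m j).aestronglyMeasurable ?_
  exact (ae_restrict_iff' measurableSet_Ioo).2
    (ae_of_all _ fun u hu => hC u (Ioo_subset_Icc_self hu))

lemma quantHoeff_sub (m : ℕ) {f g : ℝ → ℝ} (hf : Integrable f measIoo)
    (hg : Integrable g measIoo) (u : ℝ) :
    quantHoeff m (f - g) u = quantHoeff m f u - quantHoeff m g u := by
  unfold quantHoeff
  rw [← Finset.sum_sub_distrib]
  refine Finset.sum_congr rfl fun j _ => ?_
  rw [← sub_mul, ← integral_sub (aux_integrable m j hf) (aux_integrable m j hg)]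
  simp [sub_mul]

lemma quantHoeff_congr (m : ℕ) {f g : ℝ → ℝ} (h : f =ᵐ[measIoo] g) :
    quantHoeff m f = quantHoeff m g := by
  funext u
  unfold quantHoeff
  refine Finset.sum_congr rfl fun j _ => ?_
  congr 1
  refine integral_congr_ae ?_
  filter_upwards [h] with t ht
  rw [ht]

lemma quantHoeff_eval (m : ℕ) (hm : 1 ≤ m) {u : ℝ} (hu : u ∈ Ioo (0:ℝ) 1) :
    ∃ j ∈ Finset.Icc 1 m, u ∈ Ioc (((j : ℝ) - 1) / m) ((j : ℝ) / m) ∧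
      ∀ f, quantHoeff m f u = ∫ t in Ioo (0:ℝ) 1, f t * betaDens m j t := by
  have hm' : (0:ℝ) < m := by exact_mod_cast hm
  have hum : 0 < u * m := mul_pos hu.1 hm'
  have h1 : 0 < ⌈u * m⌉₊ := Nat.ceil_pos.2 hum
  have h2 : ⌈u * m⌉₊ ≤ m := Nat.ceil_le.2 (by nlinarith [hu.2])
  have h3 : u * m ≤ (⌈u * m⌉₊ : ℝ) := Nat.le_ceil _
  have h4 : (⌈u * m⌉₊ : ℝ) < u * m + 1 := Nat.ceil_lt_add_one hum.le
  have hmem : ⌈u * m⌉₊ ∈ Finset.Icc 1 m := Finset.mem_Icc.2 ⟨h1, h2⟩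
  have hI : u ∈ Ioc (((⌈u * m⌉₊ : ℝ) - 1) / m) ((⌈u * m⌉₊ : ℝ) / m) := by
    constructor
    · rw [div_lt_iff₀ hm']; linarith
    · rw [le_div_iff₀ hm']; linarith
  refine ⟨⌈u * m⌉₊, hmem, hI, fun f => ?_⟩
  unfold quantHoeff
  rw [Finset.sum_eq_single_of_mem _ hmem]
  · rw [if_pos hI, mul_one]
  · intro i _ hi
    rw [if_neg, mul_zero]
    rintro ⟨g1, g2⟩
    rw [div_lt_iff₀ hm'] at g1
    rw [le_div_iff₀ hm'] at g2
    apply hi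
    have k1 : (i : ℝ) < ⌈u * m⌉₊ + 1 := by linarith
    have k2 : (⌈u * m⌉₊ : ℝ) < i + 1 := by linarith
    have k1' : i < ⌈u * m⌉₊ + 1 := by exact_mod_cast k1
    have k2' : ⌈u * m⌉₊ < i + 1 := by exact_mod_cast k2
    omega

lemma aux_jensen (m j : ℕ) (hj : 1 ≤ j) (hjm : j ≤ m) (pr : ℝ) (hpr : 1 ≤ pr) {f : ℝ → ℝ}
    (hf : AEStronglyMeasurable f measIoo) :
    ‖∫ t in Ioo (0:ℝ) 1, f t * betaDens m j t‖ₑ ^ pr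
      ≤ ∫⁻ t, ‖f t‖ₑ ^ pr * ENNReal.ofReal (betaDens m j t) ∂measIoo := by
  have hd : Measurable fun t => ENNReal.ofReal (betaDens m j t) :=
    (betaDens_cont m j).measurable.ennreal_ofReal
  let μj : Measure ℝ := measIoo.withDensity fun t => ENNReal.ofReal (betaDens m j t)
  have hP : IsProbabilityMeasure μj := ⟨by
    rw [withDensity_apply _ MeasurableSet.univ, Measure.restrict_univ]
    exact betaDens_lintegral m j hj hjm⟩
  have hfj : AEStronglyMeasurable f μj := hf.mono_ac (withDensity_absolutelyContinuous _ _)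
  have hpr0 : 0 < pr := by linarith
  have h1 : ‖∫ t in Ioo (0:ℝ) 1, f t * betaDens m j t‖ₑ ≤ eLpNorm f 1 μj := by
    rw [eLpNorm_one_eq_lintegral_enorm,
      lintegral_withDensity_eq_lintegral_mul₀ hd.aemeasurable hf.enorm]
    refine (enorm_integral_le_lintegral_enorm _).trans (le_of_eq ?_)
    refine setLIntegral_congr_fun measurableSet_Ioo fun t ht => ?_
    simp only [Pi.mul_apply, enorm_mul]
    rw [mul_comm, Real.enorm_of_nonneg (betaDens_nonneg_s19 m j ht)]
  have h2 : eLpNorm f 1 μj ≤ eLpNorm f (ENNReal.ofReal pr) μj :=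
    eLpNorm_le_eLpNorm_of_exponent_le (by simpa using hpr) hfj
  have h3 : eLpNorm f (ENNReal.ofReal pr) μj = (∫⁻ t, ‖f t‖ₑ ^ pr ∂μj) ^ (1 / pr) := by
    rw [eLpNorm_eq_lintegral_rpow_enorm_toReal (by simpa using hpr0) ENNReal.ofReal_ne_top,
      ENNReal.toReal_ofReal hpr0.le]
  rw [h3] at h2
  have h4 := ENNReal.rpow_le_rpow (h1.trans h2) hpr0.le
  rw [← ENNReal.rpow_mul, one_div_mul_cancel hpr0.ne', ENNReal.rpow_one] at h4
  refine h4.trans (le_of_eq ?_)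
  rw [lintegral_withDensity_eq_lintegral_mul₀ hd.aemeasurable (hf.enorm.pow_const pr)]
  refine lintegral_congr fun t => ?_
  simp [mul_comm]

lemma quantHoeff_contract (m : ℕ) (pr : ℝ) (hpr : 1 ≤ pr) {f : ℝ → ℝ}
    (hf : AEStronglyMeasurable f measIoo) :
    eLpNorm (quantHoeff m f) (ENNReal.ofReal pr) measIoo
      ≤ eLpNorm f (ENNReal.ofReal pr) measIoo := by
  have hpr0 : 0 < pr := by linarith
  rcases Nat.eq_zero_or_pos m with rfl | hm
  · have : quantHoeff 0 f = 0 := by funext u; simp [quantHoeff]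
    rw [this, eLpNorm_zero]; exact bot_le
  have hm' : (0:ℝ) < m := by exact_mod_cast hm
  rw [eLpNorm_eq_lintegral_rpow_enorm_toReal (by simpa using hpr0) ENNReal.ofReal_ne_top,
    eLpNorm_eq_lintegral_rpow_enorm_toReal (by simpa using hpr0) ENNReal.ofReal_ne_top,
    ENNReal.toReal_ofReal hpr0.le]
  refine ENNReal.rpow_le_rpow ?_ (by positivity)
  let c : ℕ → ENNReal := fun j => ‖∫ t in Ioo (0:ℝ) 1, f t * betaDens m j t‖ₑ ^ pr
  let S : ℕ → Set ℝ := fun j => Ioc (((j : ℝ) - 1) / m) ((j : ℝ) / m)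
  calc ∫⁻ u, ‖quantHoeff m f u‖ₑ ^ pr ∂measIoo
      ≤ ∫⁻ u, ∑ j ∈ Finset.Icc 1 m, (S j).indicator (fun _ => c j) u ∂measIoo := by
        refine setLIntegral_mono' measurableSet_Ioo fun u hu => ?_
        obtain ⟨j, hj, hju, he⟩ := quantHoeff_eval m hm hu
        rw [he f]
        refine le_trans (le_of_eq ?_)
          (Finset.single_le_sum (f := fun j => (S j).indicator (fun _ => c j) u)
            (fun i _ => bot_le) hj)
        exact (indicator_of_mem (s := S j) hju (fun _ => c j)).symm
    _ = ∑ j ∈ Finset.Icc 1 m, ∫⁻ u, (S j).indicator (fun _ => c j) u ∂measIoo :=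
        lintegral_finsetSum _ fun j _ => measurable_const.indicator measurableSet_Ioc
    _ ≤ ∑ j ∈ Finset.Icc 1 m, ENNReal.ofReal (1 / m) *
          ∫⁻ t, ‖f t‖ₑ ^ pr * ENNReal.ofReal (betaDens m j t) ∂measIoo := by
        refine Finset.sum_le_sum fun j hj => ?_
        rw [Finset.mem_Icc] at hj
        rw [lintegral_indicator measurableSet_Ioc, setLIntegral_const, mul_comm]
        refine mul_le_mul' ?_ (aux_jensen m j hj.1 hj.2 pr hpr hf)
        refine (Measure.restrict_apply_le _ _).trans ?_
        rw [Real.volume_Ioc]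
        refine ENNReal.ofReal_le_ofReal (le_of_eq ?_)
        ring
    _ = ENNReal.ofReal (1 / m) * ∫⁻ t, ‖f t‖ₑ ^ pr *
          ∑ j ∈ Finset.Icc 1 m, ENNReal.ofReal (betaDens m j t) ∂measIoo := by
        rw [← Finset.mul_sum, ← lintegral_finsetSum']
        · simp_rw [Finset.mul_sum]
        · intro j _
          exact (hf.enorm.pow_const pr).mul
            (betaDens_cont m j).measurable.ennreal_ofReal.aemeasurable
    _ = ENNReal.ofReal (1 / m) * ∫⁻ t, ‖f t‖ₑ ^ pr * ENNReal.ofReal m ∂measIoo := by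
        congr 1
        refine setLIntegral_congr_fun measurableSet_Ioo fun t ht => ?_
        rw [← ENNReal.ofReal_sum_of_nonneg (fun j _ => betaDens_nonneg_s19 m j ht), betaDens_sum]
    _ = ∫⁻ t, ‖f t‖ₑ ^ pr ∂measIoo := by
        rw [lintegral_mul_const' _ _ ENNReal.ofReal_ne_top, mul_comm, mul_assoc,
          ← ENNReal.ofReal_mul hm'.le, mul_one_div_cancel hm'.ne', ENNReal.ofReal_one, mul_one]

instance measIoo_finite : IsFiniteMeasure measIoo := by unfold measIoo; infer_instance

instance measIoo_prob : IsProbabilityMeasure measIoo := ⟨by simp [measIoo]⟩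

lemma quantHoeff_unif {g : ℝ → ℝ} (hg : Continuous g) (hs : HasCompactSupport g)
    {ε : ℝ} (hε : 0 < ε) :
    ∃ N : ℕ, ∀ m ≥ N, ∀ u ∈ Ioo (0:ℝ) 1, |quantHoeff m g u - g u| ≤ ε := by
  have huc : UniformContinuous g := hs.uniformContinuous_of_continuous hg
  obtain ⟨δ, hδ, hgδ⟩ := Metric.uniformContinuous_iff.1 huc (ε / 2) (by positivity)
  obtain ⟨M, hM⟩ := hs.exists_bound_of_continuous hg
  have hM0 : 0 ≤ M := (norm_nonneg _).trans (hM 0)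
  set K : ℝ := 2 * M / δ ^ 2 with hK
  have hK0 : 0 ≤ K := by positivity
  have hpt : ∀ t u, |g t - g u| ≤ ε / 2 + K * (t - u) ^ 2 := by
    intro t u
    rcases lt_or_ge (dist t u) δ with h | h
    · have := hgδ h
      rw [Real.dist_eq] at this
      have : 0 ≤ K * (t - u) ^ 2 := by positivity
      linarith
    · have h1 : |g t - g u| ≤ 2 * M := by
        have := abs_sub (g t) (g u)
        have h2 := hM t; have h3 := hM u
        rw [Real.norm_eq_abs] at h2 h3
        linarith
      have h2 : δ ^ 2 ≤ (t - u) ^ 2 := by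
        rw [Real.dist_eq] at h
        rw [← sq_abs (t - u)]
        gcongr
      have h3 : 2 * M ≤ K * (t - u) ^ 2 := by
        calc 2 * M = K * δ ^ 2 := by rw [hK]; field_simp
          _ ≤ _ := by gcongr
      linarith
  obtain ⟨N, hN⟩ := exists_nat_gt (4 * K / ε)
  refine ⟨N + 1, fun m hm u hu => ?_⟩
  obtain ⟨j, hj, hju, he⟩ := quantHoeff_eval m (by omega) hu
  rw [Finset.mem_Icc] at hj
  rw [he g]
  have hgi : Integrable g measIoo := hg.integrable_of_hasCompactSupport hs |>.restrict
  have i1 := aux_integrable m j hgi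
  have i2 : Integrable (fun t => g u * betaDens m j t) (volume.restrict (Ioo (0:ℝ) 1)) :=
    (betaDens_integrable m j).const_mul _
  have i3 : Integrable (fun t => (t - u) ^ 2 * betaDens m j t) (volume.restrict (Ioo (0:ℝ) 1)) :=
    (((by fun_prop : Continuous fun t : ℝ => (t - u) ^ 2).mul
      (betaDens_cont m j)).integrableOn_Icc).mono_set Ioo_subset_Icc_self
  have i4 : Integrable (fun t => ε / 2 * betaDens m j t) (volume.restrict (Ioo (0:ℝ) 1)) :=
    (betaDens_integrable m j).const_mul _
  have e1 : g u = ∫ t in Ioo (0:ℝ) 1, g u * betaDens m j t := by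
    rw [integral_const_mul, betaDens_integral m j hj.1 hj.2, mul_one]
  have e2 : ∫ t in Ioo (0:ℝ) 1, |g t * betaDens m j t - g u * betaDens m j t|
      ≤ ∫ t in Ioo (0:ℝ) 1, (ε / 2 * betaDens m j t + K * ((t - u) ^ 2 * betaDens m j t)) := by
    refine setIntegral_mono_on (i1.sub i2).abs (i4.add (i3.const_mul K)) measurableSet_Ioo
      fun t ht => ?_
    have hb := betaDens_nonneg_s19 m j ht
    rw [← sub_mul, abs_mul, abs_of_nonneg hb]
    have := mul_le_mul_of_nonneg_right (hpt t u) hb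
    linarith
  rw [integral_add i4 (i3.const_mul K), integral_const_mul, integral_const_mul,
    betaDens_integral m j hj.1 hj.2] at e2
  have e3 := mul_le_mul_of_nonneg_left (betaDens_second m j hj.1 hj.2 u hju) hK0
  have e4 : K * (2 / m) ≤ ε / 2 := by
    have hm1 : (N : ℝ) + 1 ≤ m := by exact_mod_cast hm
    have hm0 : (0:ℝ) < m := lt_of_lt_of_le (by positivity) hm1
    rw [div_lt_iff₀ hε] at hN
    rw [mul_div_assoc', div_le_iff₀ hm0]
    nlinarith
  calc |(∫ t in Ioo (0:ℝ) 1, g t * betaDens m j t) - g u|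
      = |∫ t in Ioo (0:ℝ) 1, (g t * betaDens m j t - g u * betaDens m j t)| := by
        rw [integral_sub i1 i2, ← e1]
    _ ≤ ∫ t in Ioo (0:ℝ) 1, |g t * betaDens m j t - g u * betaDens m j t| :=
        abs_integral_le_integral_abs
    _ ≤ ε := by linarith

/-- If Borel probability measures `ν_n` on `L^p(0,1)` converge weakly to `ν`, then the
pushforwards of `ν_n` under the quantile-Hoeffding operators `I_m` converge weakly to
`ν` as `n, m → ∞` jointly. -/
theorem pushforward_quantHoeff_weak_convergence
    (pr : ℝ) (hpr : 1 ≤ pr) [Fact (1 ≤ ENNReal.ofReal pr)]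
    [m0 : MeasurableSpace (Lp ℝ (ENNReal.ofReal pr) measIoo)]
    [BorelSpace (Lp ℝ (ENNReal.ofReal pr) measIoo)]
    (ν : ℕ → Measure (Lp ℝ (ENNReal.ofReal pr) measIoo))
    (νlim : Measure (Lp ℝ (ENNReal.ofReal pr) measIoo))
    [∀ n, IsProbabilityMeasure (ν n)] [IsProbabilityMeasure νlim]
    (Imap : ℕ → Lp ℝ (ENNReal.ofReal pr) measIoo → Lp ℝ (ENNReal.ofReal pr) measIoo)
    (hImap : ∀ (m : ℕ) (f : Lp ℝ (ENNReal.ofReal pr) measIoo),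
      (Imap m f : ℝ → ℝ) =ᵐ[measIoo] quantHoeff m (f : ℝ → ℝ))
    (hweak : ∀ φ : Lp ℝ (ENNReal.ofReal pr) measIoo →ᵇ ℝ,
      Tendsto (fun n : ℕ => ∫ h, φ h ∂(ν n)) atTop (nhds (∫ h, φ h ∂νlim))) :
    ∀ φ : Lp ℝ (ENNReal.ofReal pr) measIoo →ᵇ ℝ, ∀ ε > (0:ℝ), ∃ N : ℕ,
      ∀ n m : ℕ, N ≤ n → N ≤ m →
        |(∫ h, φ (Imap m h) ∂(ν n)) - ∫ h, φ h ∂νlim| < ε := by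
  have hp1 : 1 ≤ ENNReal.ofReal pr := Fact.out
  have hint : ∀ f : Lp ℝ (ENNReal.ofReal pr) measIoo, Integrable f measIoo := fun f =>
    (Lp.memLp f).integrable hp1
  have hlip : ∀ m f g, ‖Imap m f - Imap m g‖ ≤ ‖f - g‖ := by
    intro m f g
    rw [Lp.norm_def, Lp.norm_def]
    refine ENNReal.toReal_mono (Lp.eLpNorm_ne_top _) ?_
    have h1 : eLpNorm (Imap m f - Imap m g : Lp ℝ (ENNReal.ofReal pr) measIoo)
        (ENNReal.ofReal pr) measIoo
        = eLpNorm (quantHoeff m (f - g : Lp ℝ (ENNReal.ofReal pr) measIoo))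
          (ENNReal.ofReal pr) measIoo := by
      refine eLpNorm_congr_ae ?_
      rw [quantHoeff_congr m (Lp.coeFn_sub f g)]
      filter_upwards [Lp.coeFn_sub (Imap m f) (Imap m g), hImap m f, hImap m g] with u h1 h2 h3
      rw [h1, quantHoeff_sub m (hint f) (hint g), Pi.sub_apply, h2, h3]
    rw [h1]
    exact quantHoeff_contract m pr hpr (Lp.aestronglyMeasurable _)
  refine aux_weak ν νlim Imap hlip ?_ hweak
  intro f
  rw [Metric.tendsto_atTop]
  intro ε hε
  have : measIoo.Regular := by unfold measIoo; infer_instance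
  obtain ⟨g, hgs, hfg, hgc, hgm⟩ := (Lp.memLp f).exists_hasCompactSupport_eLpNorm_sub_le
    ENNReal.ofReal_ne_top (ε := ENNReal.ofReal (ε / 4)) (by simpa using hε)
  obtain ⟨N, hN⟩ := quantHoeff_unif hgc hgs (ε := ε / 4) (by positivity)
  refine ⟨N, fun m hm => ?_⟩
  let g' : Lp ℝ (ENNReal.ofReal pr) measIoo := hgm.toLp g
  have h1 : ‖f - g'‖ ≤ ε / 4 := by
    rw [Lp.norm_def]
    refine ENNReal.toReal_le_of_le_ofReal (by positivity) ?_
    refine le_trans (le_of_eq (eLpNorm_congr_ae ?_)) hfg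
    filter_upwards [Lp.coeFn_sub f g', hgm.coeFn_toLp] with u h1 h2
    rw [h1, Pi.sub_apply, Pi.sub_apply, h2]
  have h2 : ‖Imap m g' - g'‖ ≤ ε / 4 := by
    have hb : ∀ᵐ u ∂measIoo, ‖(Imap m g' - g' : Lp ℝ (ENNReal.ofReal pr) measIoo) u‖ ≤ ε / 4 := by
      have hmem : ∀ᵐ u ∂measIoo, u ∈ Ioo (0:ℝ) 1 := ae_restrict_mem measurableSet_Ioo
      filter_upwards [Lp.coeFn_sub (Imap m g') g', hgm.coeFn_toLp, hImap m g', hmem]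
        with u h1 h2 h3 h4
      rw [h1, Pi.sub_apply, h3, quantHoeff_congr m hgm.coeFn_toLp, h2]
      exact hN m hm u h4
    have := Lp.norm_le_of_ae_bound (by positivity) hb
    simpa [measureUnivNNReal] using this
  have h3 := hlip m f g'
  have e : Imap m f - f = (Imap m f - Imap m g') + (Imap m g' - g') - (f - g') := by abel
  rw [dist_eq_norm, e]
  have h4 := norm_sub_le ((Imap m f - Imap m g') + (Imap m g' - g')) (f - g')
  have h5 := norm_add_le (Imap m f - Imap m g') (Imap m g' - g')
  linarith
end
end
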